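/- arXiv:0910.5587 — 8 statements merged into one kernel-verified Lean document; each statement's English description precedes it below -/
import Mathlib

section
/- Time-reversal invariance of the quantum brachistochrone (Theorem 1). Let d ≥ 1, T > 0, and ω, χ, φ be real numbers. Let U_f be a d×d complex matrix which is unitary (U_fᴴ * U_f = 1) and symmetric up to phase: U_fᵀ = exp(I·φ) • U_f. Let ι be a finite index type, τ : ι → Matrix (Fin d) (Fin d) ℂ a family of Hermitian matrices ((τ a)ᴴ = τ a), and ε : ι → ℝ with ε a ∈ {1, -1} such that the entrywise complex conjugate satisfies conj(τ a) = (ε a) • (τ a) for every a. Let U, V : ℝ → Matrix (Fin d) (Fin d) ℂ, h : ℝ → ι → ℝ, lam : ℝ → ℝ, and set H t = ∑ a, (h t a : ℂ) • τ a and F t = U t * (V t)ᴴ + V t * (U t)ᴴ. Assume for every t ∈ [0,T]: (i) HasDerivAt U (-I • (H t * U t)) t and HasDerivAt V (-I • (H t * V t)) t; (ii) ∑ a, (h t a)^2 = d·ω^2; (iii) ((lam t * h t a : ℝ) : ℂ) = trace (τ a * F t) for every a; and the boundary conditions U 0 = 1 and U T = exp(-I·χ) • U_f. Define the time-reversed data: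 U_rev t = conj(U (T - t)) * (U T)ᵀ, V_rev t = conj(V (T - t)) * (U T)ᵀ, h_rev t a = (ε a) * h (T - t) a, lam_rev t = lam (T - t), H_rev t = ∑ a, (h_rev t a : ℂ) • τ a, and F_rev t = U_rev t * (V_rev t)ᴴ + V_rev t * (U_rev t)ᴴ. Then the reversed data solve the same system with phase χ - φ: for every t ∈ [0,T], H_rev t = conj(H (T - t)), HasDerivAt U_rev (-I • (H_rev t * U_rev t)) t, HasDerivAt V_rev (-I • (H_rev t * V_rev t)) t, ∑ a, (h_rev t a)^2 = d·ω^2, ((lam_rev t * h_rev t a : ℝ) : ℂ) = trace (τ a * F_rev t) for every a, U_rev 0 = 1, and U_rev T = exp(-I·(χ - φ)) • U_f. -/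
/-!
Complex conjugation turns `X' = -i H X` into `(conj X)' = i (conj H) (conj X)`, and the reflection
`t ↦ T - t` flips the sign back, so `conj (X (T - t))`, times any constant matrix on the right,
solves the same equation with Hamiltonian `conj (H (T - t))` (`HasDerivAt.conj_reflect_mul`).
The condition `conj (τ a) = ε a • τ a` says precisely that this Hamiltonian has the real
coefficients `ε a * h (T - t) a`.

The constant right factor `(U T)ᵀ` is unitary because `U T` is a phase times `U_f`. It therefore
cancels from `F_rev`, which leaves `F_rev t = conj (F (T - t))`, and the trace condition for the
reversed data is the complex conjugate of the original one. The unitarity of `U T` also gives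
`U_rev 0 = 1`, and the symmetry of `U_f` up to a phase gives the value of `U_rev T`.
No unitarity of `U t` at intermediate times is needed.
-/

open Matrix

attribute [local instance] Matrix.normedAddCommGroup Matrix.normedSpace

/-- If `X' = -i K X` at `T - t`, then `s ↦ conj (X (T - s)) * W` solves the equation with
Hamiltonian `conj K` at `t`, for every constant matrix `W`. -/
lemma HasDerivAt.conj_reflect_mul {d : ℕ} {X : ℝ → Matrix (Fin d) (Fin d) ℂ}
    {K : Matrix (Fin d) (Fin d) ℂ} (W : Matrix (Fin d) (Fin d) ℂ) {T t : ℝ}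
    (hX : HasDerivAt X (-Complex.I • (K * X (T - t))) (T - t)) :
    HasDerivAt (fun s => (X (T - s)).map (starRingEnd ℂ) * W)
      (-Complex.I • (K.map (starRingEnd ℂ) * ((X (T - t)).map (starRingEnd ℂ) * W))) t := by
  -- `M ↦ conj M * W` is only real-linear, hence the real scalars.
  let L : Matrix (Fin d) (Fin d) ℂ →ₗ[ℝ] Matrix (Fin d) (Fin d) ℂ :=
    { toFun := fun M => M.map (starRingEnd ℂ) * W
      map_add' := fun A B => by
        rw [Matrix.map_add _ (map_add _), Matrix.add_mul]
      map_smul' := fun r A => by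
        have : (r • A).map (starRingEnd ℂ) = r • A.map (starRingEnd ℂ) := by
          ext i j
          simp
        rw [this, Matrix.smul_mul, RingHom.id_apply] }
  have h := (LinearMap.toContinuousLinearMap L).hasFDerivAt.comp_hasDerivAt t
    (hX.comp_const_sub T t)
  have key : L (-(-Complex.I • (K * X (T - t)))) =
      -Complex.I • (K.map (starRingEnd ℂ) * ((X (T - t)).map (starRingEnd ℂ) * W)) := by
    change (-(-Complex.I • (K * X (T - t)))).map (starRingEnd ℂ) * W = _
    have hconj (M : Matrix (Fin d) (Fin d) ℂ) :
        (-(-Complex.I • M)).map (starRingEnd ℂ) = -Complex.I • M.map (starRingEnd ℂ) := by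
      ext i j
      simp
    rw [hconj, Matrix.map_mul, Matrix.smul_mul, Matrix.mul_assoc]
  rw [← key]
  exact h

/-- A unitary right factor cancels from `A Bᴴ` after conjugation:
`(conj A Wᵀ) (conj B Wᵀ)ᴴ = conj (A Bᴴ)`. -/
lemma conj_mul_transpose_mul_conjTranspose {d : ℕ} {W : Matrix (Fin d) (Fin d) ℂ}
    (hW : Wᴴ * W = 1) (A B : Matrix (Fin d) (Fin d) ℂ) :
    (A.map (starRingEnd ℂ) * Wᵀ) * (B.map (starRingEnd ℂ) * Wᵀ)ᴴ =
      (A * Bᴴ).map (starRingEnd ℂ) := by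
  have h1 : Wᵀ * Wᵀᴴ = 1 := by
    have : Wᵀᴴ = Wᴴᵀ := rfl
    rw [this, ← Matrix.transpose_mul, hW, Matrix.transpose_one]
  have h2 : (B.map (starRingEnd ℂ))ᴴ = Bᴴ.map (starRingEnd ℂ) := rfl
  rw [Matrix.conjTranspose_mul, Matrix.mul_assoc, ← Matrix.mul_assoc Wᵀ, h1, Matrix.one_mul, h2,
    Matrix.map_mul]

/-- Time-reversal invariance of the quantum brachistochrone (Theorem 1): if
`(U, H, V, λ)` solves the brachistochrone system on `[0, T]` for a target `U_f` that is
unitary and symmetric up to the phase `φ`, with Hermitian generators `τ a` satisfying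
`conj (τ a) = ε a • τ a` with `ε a = ±1`, then the time-reversed data
`U_rev t = conj (U (T-t)) * (U T)ᵀ`, `V_rev t = conj (V (T-t)) * (U T)ᵀ`,
`h_rev t a = ε a * h (T-t) a`, `λ_rev t = λ (T-t)` solve the same system with phase
`χ - φ`, and `H_rev t = conj (H (T-t))`. -/
theorem brachistochrone_time_reversal
    (d : ℕ) (hd : 1 ≤ d) (T : ℝ) (hT : 0 < T) (ω χ φ : ℝ)
    (Uf : Matrix (Fin d) (Fin d) ℂ)
    (hUf_unitary : Ufᴴ * Uf = 1)
    (hUf_symm : Ufᵀ = Complex.exp (Complex.I * φ) • Uf)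
    (ι : Type*) [Fintype ι]
    (τ : ι → Matrix (Fin d) (Fin d) ℂ) (hτ : ∀ a, (τ a)ᴴ = τ a)
    (ε : ι → ℝ) (hε : ∀ a, ε a ∈ ({1, -1} : Set ℝ))
    (hτconj : ∀ a, (τ a).map (starRingEnd ℂ) = (ε a : ℂ) • τ a)
    (U V : ℝ → Matrix (Fin d) (Fin d) ℂ) (h : ℝ → ι → ℝ) (lam : ℝ → ℝ)
    (H : ℝ → Matrix (Fin d) (Fin d) ℂ)
    (hHdef : ∀ t, H t = ∑ a, (h t a : ℂ) • τ a)
    (F : ℝ → Matrix (Fin d) (Fin d) ℂ)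
    (hFdef : ∀ t, F t = U t * (V t)ᴴ + V t * (U t)ᴴ)
    (hUder : ∀ t ∈ Set.Icc (0 : ℝ) T, HasDerivAt U (-Complex.I • (H t * U t)) t)
    (hVder : ∀ t ∈ Set.Icc (0 : ℝ) T, HasDerivAt V (-Complex.I • (H t * V t)) t)
    (hnorm : ∀ t ∈ Set.Icc (0 : ℝ) T, ∑ a, (h t a) ^ 2 = (d : ℝ) * ω ^ 2)
    (hmult : ∀ t ∈ Set.Icc (0 : ℝ) T, ∀ a,
      ((lam t * h t a : ℝ) : ℂ) = (τ a * F t).trace)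
    (hU0 : U 0 = 1) (hUT : U T = Complex.exp (-Complex.I * χ) • Uf)
    (Urev Vrev : ℝ → Matrix (Fin d) (Fin d) ℂ) (hrev : ℝ → ι → ℝ)
    (lamrev : ℝ → ℝ) (Hrev Frev : ℝ → Matrix (Fin d) (Fin d) ℂ)
    (hUrevdef : ∀ t, Urev t = (U (T - t)).map (starRingEnd ℂ) * (U T)ᵀ)
    (hVrevdef : ∀ t, Vrev t = (V (T - t)).map (starRingEnd ℂ) * (U T)ᵀ)
    (hhrevdef : ∀ t a, hrev t a = ε a * h (T - t) a)
    (hlamrevdef : ∀ t, lamrev t = lam (T - t))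
    (hHrevdef : ∀ t, Hrev t = ∑ a, (hrev t a : ℂ) • τ a)
    (hFrevdef : ∀ t, Frev t = Urev t * (Vrev t)ᴴ + Vrev t * (Urev t)ᴴ) :
    (∀ t ∈ Set.Icc (0 : ℝ) T,
      Hrev t = (H (T - t)).map (starRingEnd ℂ) ∧
      HasDerivAt Urev (-Complex.I • (Hrev t * Urev t)) t ∧
      HasDerivAt Vrev (-Complex.I • (Hrev t * Vrev t)) t ∧
      (∑ a, (hrev t a) ^ 2 = (d : ℝ) * ω ^ 2) ∧
      ∀ a, ((lamrev t * hrev t a : ℝ) : ℂ) = (τ a * Frev t).trace) ∧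
    Urev 0 = 1 ∧
    Urev T = Complex.exp (-Complex.I * (χ - φ)) • Uf := by
  have hphase (x : ℝ) : (starRingEnd ℂ) (Complex.exp (-Complex.I * x)) *
      Complex.exp (-Complex.I * x) = 1 := by
    rw [← Complex.exp_conj, ← Complex.exp_add]
    simp
  have hW : (U T)ᴴ * U T = 1 := by
    rw [hUT, Matrix.conjTranspose_smul, Matrix.smul_mul, Matrix.mul_smul, smul_smul, hUf_unitary]
    change ((starRingEnd ℂ) _ * _) • (1 : Matrix (Fin d) (Fin d) ℂ) = 1
    rw [hphase, one_smul]
  have hsq (a : ι) : ε a * ε a = 1 := by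
    rcases hε a with h1 | h1
    · rw [h1]; norm_num
    · rw [Set.mem_singleton_iff.mp h1]; norm_num
  have hH (t : ℝ) : Hrev t = (H (T - t)).map (starRingEnd ℂ) := by
    rw [hHrevdef, hHdef]
    ext i j
    simp only [Matrix.map_apply, Matrix.sum_apply, Matrix.smul_apply, map_sum, smul_eq_mul,
      map_mul, Complex.conj_ofReal, hhrevdef]
    refine Finset.sum_congr rfl fun a _ => ?_
    have := congrFun (congrFun (hτconj a) i) j
    simp only [Matrix.map_apply, Matrix.smul_apply, smul_eq_mul] at this
    rw [this]
    push_cast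
    ring
  have hF (t : ℝ) : Frev t = (F (T - t)).map (starRingEnd ℂ) := by
    rw [hFrevdef, hFdef, hUrevdef, hVrevdef, conj_mul_transpose_mul_conjTranspose hW,
      conj_mul_transpose_mul_conjTranspose hW, ← Matrix.map_add _ (map_add _)]
  refine ⟨fun t ht => ?_, ?_, ?_⟩
  · have ht' : T - t ∈ Set.Icc (0 : ℝ) T := ⟨by linarith [ht.2], by linarith [ht.1]⟩
    refine ⟨hH t, ?_, ?_, ?_, fun a => ?_⟩
    · rw [hH, hUrevdef t, funext hUrevdef]
      exact (hUder _ ht').conj_reflect_mul _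
    · rw [hH, hVrevdef t, funext hVrevdef]
      exact (hVder _ ht').conj_reflect_mul _
    · rw [← hnorm _ ht']
      refine Finset.sum_congr rfl fun a _ => ?_
      rw [hhrevdef, mul_pow, pow_two (ε a), hsq, one_mul]
    · have hτ' : τ a = (ε a : ℂ) • (τ a).map (starRingEnd ℂ) := by
        rw [hτconj, smul_smul, ← Complex.ofReal_mul, hsq, Complex.ofReal_one, one_smul]
      have htr (M : Matrix (Fin d) (Fin d) ℂ) :
          (M.map (starRingEnd ℂ)).trace = (starRingEnd ℂ) M.trace := by
        simp [Matrix.trace, map_sum]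
      rw [hF, hτ', Matrix.smul_mul, ← Matrix.map_mul, Matrix.trace_smul, htr, ← hmult _ ht' a,
        Complex.conj_ofReal, hlamrevdef, hhrevdef, smul_eq_mul]
      push_cast
      ring
  · have h1 : (U T)ᵀ = ((U T)ᴴ).map (starRingEnd ℂ) := by
      ext i j
      simp
    rw [hUrevdef, sub_zero, h1, ← Matrix.map_mul, mul_eq_one_comm.mp hW]
    exact Matrix.map_one _ (map_zero _) (map_one _)
  · rw [hUrevdef, sub_self, hU0, Matrix.map_one _ (map_zero _) (map_one _), Matrix.one_mul, hUT,
      Matrix.transpose_smul, hUf_symm, smul_smul, ← Complex.exp_add]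
    congr 2
    ring
end

section
/- Time reversal of the boundary conditions. Let d ≥ 1, T, χ, φ real numbers, and U_f a d×d complex matrix which is unitary (U_fᴴ * U_f = 1 and U_f * U_fᴴ = 1) and symmetric up to phase: U_fᵀ = exp(I·φ) • U_f. Let U : ℝ → Matrix (Fin d) (Fin d) ℂ satisfy U 0 = 1 and U T = exp(-I·χ) • U_f. Define U_rev t = conj(U (T - t)) * (U T)ᵀ. Then U_rev 0 = 1 and U_rev T = exp(-I·(χ - φ)) • U_f. -/
open Matrix

/-! At `t = 0` the reversed curve is `conj (U T) * (U T)ᵀ = (U T * (U T)ᴴ)ᵀ`, which is `1` because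
`U T` is a phase times a unitary. At `t = T` it is `(U T)ᵀ = exp (-I χ) • Ufᵀ`, and the symmetry of
`Uf` up to phase contributes the additional factor `exp (I φ)`. -/

/-- Time reversal of the boundary conditions: if `U_f` is unitary and symmetric up to the
phase `φ`, and `U 0 = 1`, `U T = exp (-I χ) • U_f`, then the time-reversed curve
`U_rev t = conj (U (T - t)) * (U T)ᵀ` satisfies `U_rev 0 = 1` and
`U_rev T = exp (-I (χ - φ)) • U_f`. -/
theorem time_reversal_boundary_conditions (d : ℕ) (hd : 1 ≤ d) (T χ φ : ℝ)
    (Uf : Matrix (Fin d) (Fin d) ℂ)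
    (hUf₁ : Ufᴴ * Uf = 1) (hUf₂ : Uf * Ufᴴ = 1)
    (hUfsymm : Ufᵀ = Complex.exp (Complex.I * φ) • Uf)
    (U : ℝ → Matrix (Fin d) (Fin d) ℂ)
    (hU0 : U 0 = 1) (hUT : U T = Complex.exp (-Complex.I * χ) • Uf) :
    (U (T - 0)).map (starRingEnd ℂ) * (U T)ᵀ = 1 ∧
      (U (T - T)).map (starRingEnd ℂ) * (U T)ᵀ
        = Complex.exp (-Complex.I * (χ - φ)) • Uf := by
  constructor
  · -- `conj Uf * Ufᵀ` is the transpose of `Uf * Ufᴴ`.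
    have hconj : Uf.map (starRingEnd ℂ) * Ufᵀ = 1 := by
      have h := congrArg Matrix.transpose hUf₂
      rwa [Matrix.transpose_mul, Matrix.transpose_one] at h
    have hmap : (Complex.exp (-Complex.I * χ) • Uf).map (starRingEnd ℂ)
        = Complex.exp (Complex.I * χ) • Uf.map (starRingEnd ℂ) := by
      ext i j
      simp [← Complex.exp_conj]
    rw [sub_zero, hUT, hmap, Matrix.transpose_smul, Matrix.smul_mul, Matrix.mul_smul, hconj,
      smul_smul, ← Complex.exp_add]
    simp
  · have hone : (1 : Matrix (Fin d) (Fin d) ℂ).map (starRingEnd ℂ) = 1 :=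
      Matrix.map_one _ (map_zero _) (map_one _)
    rw [sub_self, hU0, hone, one_mul, hUT, Matrix.transpose_smul, hUfsymm, smul_smul,
      ← Complex.exp_add]
    congr 2
    ring
end

section
/- Constancy of the Lagrange multiplier λ. Let d ≥ 1, T > 0, ω ≠ 0 a real number, ι a finite index type, and τ : ι → Matrix (Fin d) (Fin d) ℂ. Let F : ℝ → Matrix (Fin d) (Fin d) ℂ, h : ℝ → ι → ℝ, lam : ℝ → ℝ, and set H t = ∑ a, (h t a : ℂ) • τ a. Assume for every t ∈ [0,T]: (i) HasDerivAt F (-I • (H t * F t - F t * H t)) t; (ii) ((lam t * h t a : ℝ) : ℂ) = trace (τ a * F t) for every a; (iii) ∑ a, (h t a)^2 = d·ω^2; and (iv) lam t ≥ 0. Then lam is constant on [0,T]: for all s, t ∈ [0,T], lam s = lam t. -/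
/-!
The function `t ↦ ∑ a, Tr (τ a * F t) ^ 2` is conserved. By the multiplier equation
`Tr (τ a * F) = λ h a`, its derivative is
`2 λ ∑ a, h a * Tr (τ a * Ḟ) = 2 λ Tr (H * Ḟ) = -2 i λ Tr (H * [H, F])`,
which vanishes by cyclicity of the trace (`trace_mul_commutator_self`). By the normalization the
conserved quantity equals `λ ^ 2 * d * ω ^ 2`; since `d * ω ^ 2 ≠ 0` and `λ ≥ 0`, the multiplier
is constant. No differentiability of `λ` or `h` is needed.
-/

open Matrix

attribute [local instance] Matrix.normedAddCommGroup Matrix.normedSpace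

theorem trace_mul_commutator_self {n : ℕ} (A B : Matrix (Fin n) (Fin n) ℂ) :
    (A * (A * B - B * A)).trace = 0 := by
  rw [Matrix.mul_sub, Matrix.trace_sub, ← Matrix.mul_assoc A B A, Matrix.trace_mul_comm (A * B) A,
    sub_self]

/-- The linear functional `M ↦ Tr (A * M)` commutes with differentiation; it is continuous
because the space of matrices is finite-dimensional. -/
theorem hasDerivAt_trace_mul {n : ℕ} (A : Matrix (Fin n) (Fin n) ℂ)
    {F : ℝ → Matrix (Fin n) (Fin n) ℂ} {F' : Matrix (Fin n) (Fin n) ℂ} {t : ℝ}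
    (hF : HasDerivAt F F' t) :
    HasDerivAt (fun s => (A * F s).trace) (A * F').trace t := by
  let L : Matrix (Fin n) (Fin n) ℂ →ₗ[ℝ] ℂ :=
    { toFun := fun M => (A * M).trace
      map_add' := fun M N => by rw [Matrix.mul_add, Matrix.trace_add]
      map_smul' := fun c M => by rw [Matrix.mul_smul, Matrix.trace_smul, RingHom.id_apply] }
  exact (LinearMap.toContinuousLinearMap L).hasFDerivAt.comp_hasDerivAt t hF

/-- Constancy of the Lagrange multiplier `λ`: if `i Ḟ = [H, F]` with
`H t = ∑ a, h t a • τ a`, the multiplier equation `λ t * h t a = Tr (τ a * F t)` holds, the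
normalization `∑ a, (h t a)² = d ω²` holds, and `λ t ≥ 0`, all on `[0, T]`, then `λ` is
constant on `[0, T]`. -/
theorem lagrange_multiplier_constant (d : ℕ) (hd : 1 ≤ d) (T : ℝ) (hT : 0 < T)
    (ω : ℝ) (hω : ω ≠ 0) (ι : Type*) [Fintype ι]
    (τ : ι → Matrix (Fin d) (Fin d) ℂ)
    (F : ℝ → Matrix (Fin d) (Fin d) ℂ) (h : ℝ → ι → ℝ) (lam : ℝ → ℝ)
    (hder : ∀ t ∈ Set.Icc (0 : ℝ) T,
      HasDerivAt F
        (-Complex.I • ((∑ a, (h t a : ℂ) • τ a) * F t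
          - F t * ∑ a, (h t a : ℂ) • τ a)) t)
    (hmult : ∀ t ∈ Set.Icc (0 : ℝ) T, ∀ a,
      ((lam t * h t a : ℝ) : ℂ) = (τ a * F t).trace)
    (hnorm : ∀ t ∈ Set.Icc (0 : ℝ) T, ∑ a, (h t a) ^ 2 = (d : ℝ) * ω ^ 2)
    (hpos : ∀ t ∈ Set.Icc (0 : ℝ) T, 0 ≤ lam t) :
    ∀ s ∈ Set.Icc (0 : ℝ) T, ∀ t ∈ Set.Icc (0 : ℝ) T, lam s = lam t := by
  have hsum : ∀ t ∈ Set.Icc (0 : ℝ) T,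
      ∑ a, ((τ a * F t).trace) ^ 2 = ((lam t ^ 2 * (d * ω ^ 2) : ℝ) : ℂ) := by
    intro t ht
    rw [← hnorm t ht, Finset.mul_sum, Complex.ofReal_sum]
    refine Finset.sum_congr rfl fun a _ => ?_
    rw [← hmult t ht a, ← Complex.ofReal_pow, mul_pow]
  have hzero : ∀ t ∈ Set.Icc (0 : ℝ) T,
      HasDerivAt (fun s => ∑ a, ((τ a * F s).trace) ^ 2) 0 t := by
    intro t ht
    have h1 := HasDerivAt.fun_sum (u := Finset.univ) fun a _ =>
      (hasDerivAt_trace_mul (τ a) (hder t ht)).fun_pow 2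
    refine h1.congr_deriv (Eq.symm ?_)
    set H := ∑ a, (h t a : ℂ) • τ a with hH
    set D := -Complex.I • (H * F t - F t * H) with hD
    have h2 : (H * D).trace = 0 := by
      rw [hD, Matrix.mul_smul, Matrix.trace_smul, trace_mul_commutator_self, smul_zero]
    have h3 : (H * D).trace = ∑ a, (h t a : ℂ) * (τ a * D).trace := by
      rw [hH, Matrix.sum_mul, Matrix.trace_sum]
      simp only [Matrix.smul_mul, Matrix.trace_smul, smul_eq_mul]
    calc (0 : ℂ) = 2 * lam t * ∑ a, (h t a : ℂ) * (τ a * D).trace := by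
          rw [← h3, h2, mul_zero]
      _ = _ := by
          rw [Finset.mul_sum]
          refine Finset.sum_congr rfl fun a _ => ?_
          rw [← hmult t ht a]
          push_cast
          ring
  have hconst := constant_of_has_deriv_right_zero
    (fun t ht => (hzero t ht).continuousAt.continuousWithinAt)
    (fun t ht => (hzero t (Set.Ico_subset_Icc_self ht)).hasDerivWithinAt)
  intro s hs t ht
  have hst := (hconst s hs).trans (hconst t ht).symm
  simp only [hsum s hs, hsum t ht] at hst
  have hd0 : (d : ℝ) ≠ 0 := by exact_mod_cast (Nat.one_le_iff_ne_zero.mp hd)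
  have hsq := mul_right_cancel₀ (mul_ne_zero hd0 (pow_ne_zero 2 hω)) (Complex.ofReal_injective hst)
  exact (sq_eq_sq₀ (hpos s hs) (hpos t ht)).mp hsq
end

section
/- Constancy of the one-qubit part of the optimal Hamiltonian (Theorem 2). Fix a natural number n ≥ 1 and let T > 0 and lam be a nonzero real number. Let H, F : ℝ → Matrix (Fin n → Fin 2) (Fin n → Fin 2) ℂ. Assume for every t ∈ [0,T]: (i) H t lies in the span of Pauli strings with weight in {1, 2}; (ii) F t - (lam : ℂ) • H t lies in the span of Pauli strings with weight in {0} ∪ {w | w ≥ 3}; (iii) HasDerivAt F (-I • (H t * F t - F t * H t)) t. Then for every a : Fin n → Fin 4 with weight a = 1, the function t ↦ trace (P a * H t) is constant on [0,T]: for all s, t ∈ [0,T], trace (P a * H s) = trace (P a * H t). -/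
/-!
Write `F = λ H + G`, where `G` has only components of weight `0` or at least `3`. Pauli strings
with different supports are orthogonal for the trace form (`trace_pauliString_mul_eq_zero`), so
`Tr (P a * F) = λ Tr (P a * H)` when `a` has weight `1`. Since `[H, F] = [H, G]`, the derivative
of the left side is `-i Tr (P a * [H, G])`, and this vanishes
(`trace_pauliString_mul_commutator_mem_span`): on Pauli strings, `Tr (P a * [P b, P c])` can be
nonzero only if the three supports share a site `j`; as `a` is supported on `j` alone and `b` has
at most two sites, a string `c` of weight at least `3` then has a site outside the
supports of `a` and `b`, where a traceless factor kills the trace. Hence `Tr (P a * F)` is constant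
on `[0, T]`, and so is `Tr (P a * H)`, as `λ ≠ 0`.
-/

open Matrix

/-- The four `2 × 2` Pauli matrices: `σ₀ = 1`, `σ₁ = σ_x`, `σ₂ = σ_y`, `σ₃ = σ_z`. -/
noncomputable def pauli : Fin 4 → Matrix (Fin 2) (Fin 2) ℂ
  | 0 => 1
  | 1 => !![0, 1; 1, 0]
  | 2 => !![0, -Complex.I; Complex.I, 0]
  | 3 => !![1, 0; 0, -1]

/-- The Pauli string `P a`, the `n`-fold Kronecker product of the matrices `σ (a i)`. -/
noncomputable def pauliString {n : ℕ} (a : Fin n → Fin 4) :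
    Matrix (Fin n → Fin 2) (Fin n → Fin 2) ℂ :=
  Matrix.of fun x y => ∏ i, pauli (a i) (x i) (y i)

/-- The weight of a Pauli string label: the number of non-identity tensor factors. -/
def pauliWeight {n : ℕ} (a : Fin n → Fin 4) : ℕ :=
  (Finset.univ.filter fun i => a i ≠ 0).card

/-- The span of the Pauli strings whose weight lies in the set `S`. -/
noncomputable def pauliSpan (n : ℕ) (S : Set ℕ) :
    Submodule ℂ (Matrix (Fin n → Fin 2) (Fin n → Fin 2) ℂ) :=
  Submodule.span ℂ {M | ∃ a : Fin n → Fin 4, pauliWeight a ∈ S ∧ pauliString a = M}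

attribute [local instance] Matrix.normedAddCommGroup Matrix.normedSpace

/-- The Kronecker product of a finite family of `2 × 2` matrices; `pauliString a` is
`kronFamily fun i => pauli (a i)` by definition. -/
def kronFamily {n : ℕ} (f : Fin n → Matrix (Fin 2) (Fin 2) ℂ) :
    Matrix (Fin n → Fin 2) (Fin n → Fin 2) ℂ :=
  Matrix.of fun x y => ∏ i, f i (x i) (y i)

theorem kronFamily_mul {n : ℕ} (f g : Fin n → Matrix (Fin 2) (Fin 2) ℂ) :
    kronFamily f * kronFamily g = kronFamily fun i => f i * g i := by
  ext x y
  simp only [kronFamily, Matrix.mul_apply, Matrix.of_apply, Finset.prod_univ_sum,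
    Fintype.piFinset_univ, Finset.prod_mul_distrib]

theorem trace_kronFamily {n : ℕ} (f : Fin n → Matrix (Fin 2) (Fin 2) ℂ) :
    (kronFamily f).trace = ∏ i, (f i).trace := by
  simp only [kronFamily, Matrix.trace, Matrix.diag_apply, Matrix.of_apply, Finset.prod_univ_sum,
    Fintype.piFinset_univ]

theorem pauliString_eq_kronFamily {n : ℕ} (a : Fin n → Fin 4) :
    pauliString a = kronFamily fun i => pauli (a i) := rfl

theorem pauli_zero : pauli 0 = 1 := rfl

theorem trace_pauli {k : Fin 4} (hk : k ≠ 0) : (pauli k).trace = 0 := by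
  fin_cases k
  · exact absurd rfl hk
  all_goals simp [pauli, Matrix.trace, Fin.sum_univ_two]

/-- Pauli strings of different weights have different supports, hence are orthogonal: at a site
lying in only one of the two supports the trace of the factor is zero. -/
theorem trace_pauliString_mul_eq_zero {n : ℕ} {a b : Fin n → Fin 4}
    (h : pauliWeight a ≠ pauliWeight b) : (pauliString a * pauliString b).trace = 0 := by
  have hex : ∃ j, ¬ (a j ≠ 0 ↔ b j ≠ 0) := by
    by_contra! hc
    exact h (congrArg Finset.card (Finset.filter_congr fun j _ => hc j))
  obtain ⟨j, hj⟩ := hex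
  rw [pauliString_eq_kronFamily, pauliString_eq_kronFamily, kronFamily_mul, trace_kronFamily]
  refine Finset.prod_eq_zero (Finset.mem_univ j) ?_
  by_cases h1 : a j = 0
  · have h2 : b j ≠ 0 := by tauto
    rw [h1, pauli_zero, one_mul, trace_pauli h2]
  · have h2 : b j = 0 := by tauto
    rw [h2, pauli_zero, mul_one, trace_pauli h1]

theorem trace_pauliString_mul_commutator {n : ℕ} {a b c : Fin n → Fin 4}
    (ha : pauliWeight a = 1) (hb : pauliWeight b ≤ 2)
    (hc : pauliWeight c = 0 ∨ 3 ≤ pauliWeight c) :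
    (pauliString a * (pauliString b * pauliString c - pauliString c * pauliString b)).trace
      = 0 := by
  simp only [mul_sub, Matrix.trace_sub, pauliString_eq_kronFamily, kronFamily_mul,
    trace_kronFamily]
  rw [sub_eq_zero]
  by_cases hj : ∃ j, a j ≠ 0 ∧ b j ≠ 0 ∧ c j ≠ 0
  · obtain ⟨j, haj, hbj, hcj⟩ := hj
    have hc3 : 3 ≤ pauliWeight c := by
      refine hc.resolve_left fun h0 => ?_
      rw [pauliWeight, Finset.card_eq_zero] at h0
      exact Finset.notMem_empty j (h0 ▸ Finset.mem_filter.2 ⟨Finset.mem_univ j, hcj⟩)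
    obtain ⟨k, hkc, hkb⟩ := Finset.exists_mem_notMem_of_card_lt_card
      (show pauliWeight b < pauliWeight c by omega)
    have hck : c k ≠ 0 := (Finset.mem_filter.1 hkc).2
    have hbk : b k = 0 := by simpa using hkb
    have hak : a k = 0 := by
      by_contra hak
      -- The support of `a` is a singleton, so `k = j`, which lies in the support of `b`.
      have hkj : k = j := Finset.card_le_one.1 ha.le k (by simpa using hak) j (by simpa using haj)
      exact hbj (hkj ▸ hbk)
    rw [Finset.prod_eq_zero (Finset.mem_univ k), Finset.prod_eq_zero (Finset.mem_univ k)] <;>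
      simp [hak, hbk, pauli_zero, trace_pauli hck]
  · refine Finset.prod_congr rfl fun j _ => ?_
    by_cases h1 : a j = 0
    · rw [h1, pauli_zero, one_mul, one_mul, Matrix.trace_mul_comm]
    by_cases h2 : b j = 0
    · rw [h2, pauli_zero, one_mul, mul_one]
    have h3 : c j = 0 := by
      by_contra h3
      exact hj ⟨j, h1, h2, h3⟩
    rw [h3, pauli_zero, one_mul, mul_one]

theorem trace_pauliString_mul_mem_span {n : ℕ} {a : Fin n → Fin 4} (ha : pauliWeight a = 1)
    {G : Matrix (Fin n → Fin 2) (Fin n → Fin 2) ℂ}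
    (hG : G ∈ pauliSpan n ({0} ∪ {w | 3 ≤ w})) : (pauliString a * G).trace = 0 := by
  induction hG using Submodule.span_induction with
  | mem M hM =>
    obtain ⟨c, hc, rfl⟩ := hM
    have hc' : pauliWeight c = 0 ∨ 3 ≤ pauliWeight c := hc
    exact trace_pauliString_mul_eq_zero (by omega)
  | zero => simp
  | add x y _ _ hx hy => rw [mul_add, Matrix.trace_add, hx, hy, add_zero]
  | smul r x _ hx => rw [mul_smul_comm, Matrix.trace_smul, hx, smul_zero]

theorem trace_pauliString_mul_commutator_mem_span {n : ℕ} {a : Fin n → Fin 4}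
    (ha : pauliWeight a = 1) {A G : Matrix (Fin n → Fin 2) (Fin n → Fin 2) ℂ}
    (hA : A ∈ pauliSpan n {1, 2}) (hG : G ∈ pauliSpan n ({0} ∪ {w | 3 ≤ w})) :
    (pauliString a * (A * G - G * A)).trace = 0 := by
  induction hA, hG using Submodule.span_induction₂ with
  | mem_mem x y hx hy =>
    obtain ⟨b, hb, rfl⟩ := hx
    obtain ⟨c, hc, rfl⟩ := hy
    have hb' : pauliWeight b = 1 ∨ pauliWeight b = 2 := hb
    exact trace_pauliString_mul_commutator ha (by omega) hc
  | zero_left y _ => simp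
  | zero_right x _ => simp
  | add_left x y z _ _ _ hx hy =>
    rw [add_mul, mul_add z, add_sub_add_comm, mul_add, Matrix.trace_add, hx, hy, add_zero]
  | add_right x y z _ _ _ hx hy =>
    rw [add_mul, mul_add x, add_sub_add_comm, mul_add, Matrix.trace_add, hx, hy, add_zero]
  | smul_left r x y _ _ h =>
    rw [smul_mul_assoc, mul_smul_comm, ← smul_sub, mul_smul_comm, Matrix.trace_smul, h, smul_zero]
  | smul_right r x y _ _ h =>
    rw [smul_mul_assoc, mul_smul_comm, ← smul_sub, mul_smul_comm, Matrix.trace_smul, h, smul_zero]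

/-- Constancy of the one-qubit part of the optimal Hamiltonian (Theorem 2): if `H t` lies in
the span of Pauli strings of weight `1` or `2`, `F t - λ • H t` lies in the span of Pauli
strings of weight `0` or `≥ 3`, and `i Ḟ = [H, F]` on `[0, T]`, then every weight-1
component `Tr (P a * H t)` of the Hamiltonian is constant on `[0, T]`. -/
theorem one_qubit_part_constant (n : ℕ) (hn : 1 ≤ n) (T : ℝ) (hT : 0 < T)
    (lam : ℝ) (hlam : lam ≠ 0)
    (H F : ℝ → Matrix (Fin n → Fin 2) (Fin n → Fin 2) ℂ)
    (hH : ∀ t ∈ Set.Icc (0 : ℝ) T, H t ∈ pauliSpan n {1, 2})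
    (hF : ∀ t ∈ Set.Icc (0 : ℝ) T,
      F t - (lam : ℂ) • H t ∈ pauliSpan n ({0} ∪ {w | 3 ≤ w}))
    (hder : ∀ t ∈ Set.Icc (0 : ℝ) T,
      HasDerivAt F (-Complex.I • (H t * F t - F t * H t)) t)
    (a : Fin n → Fin 4) (ha : pauliWeight a = 1) :
    ∀ s ∈ Set.Icc (0 : ℝ) T, ∀ t ∈ Set.Icc (0 : ℝ) T,
      (pauliString a * H s).trace = (pauliString a * H t).trace := by
  have hFH : ∀ t ∈ Set.Icc (0 : ℝ) T,
      (pauliString a * F t).trace = (lam : ℂ) * (pauliString a * H t).trace := by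
    intro t ht
    have h := trace_pauliString_mul_mem_span ha (hF t ht)
    rwa [mul_sub, Matrix.trace_sub, mul_smul_comm, Matrix.trace_smul, sub_eq_zero] at h
  have hd : ∀ t ∈ Set.Icc (0 : ℝ) T,
      HasDerivAt (fun t => (pauliString a * F t).trace) 0 t := by
    intro t ht
    let L : Matrix (Fin n → Fin 2) (Fin n → Fin 2) ℂ →ₗ[ℝ] ℂ :=
      (Matrix.traceLinearMap (Fin n → Fin 2) ℝ ℂ) ∘ₗ LinearMap.mulLeft ℝ (pauliString a)
    have h : HasDerivAt (fun t => (pauliString a * F t).trace)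
        (pauliString a * (-Complex.I • (H t * F t - F t * H t))).trace t :=
      (LinearMap.toContinuousLinearMap L).hasFDerivAt.comp_hasDerivAt t (hder t ht)
    have h0 : (pauliString a * (-Complex.I • (H t * F t - F t * H t))).trace = 0 := by
      -- `H t` commutes with its own multiple, so `F t` may be replaced by `F t - lam • H t`.
      have hcomm : H t * F t - F t * H t
          = H t * (F t - (lam : ℂ) • H t) - (F t - (lam : ℂ) • H t) * H t := by
        rw [mul_sub, sub_mul, mul_smul_comm, smul_mul_assoc]
        abel
      rw [mul_smul_comm, Matrix.trace_smul, hcomm,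
        trace_pauliString_mul_commutator_mem_span ha (hH t ht) (hF t ht), smul_zero]
    rwa [h0] at h
  have hconst := constant_of_has_deriv_right_zero
    (fun t ht => (hd t ht).continuousAt.continuousWithinAt)
    (fun t ht => (hd t (Set.Ico_subset_Icc_self ht)).hasDerivWithinAt)
  intro s hs t ht
  have h := (hconst s hs).trans (hconst t ht).symm
  rw [hFH s hs, hFH t ht] at h
  exact mul_left_cancel₀ (Complex.ofReal_ne_zero.2 hlam) h
end

section
/- Grading of commutators of Pauli-weight subspaces (equation (26)). Fix a natural number n ≥ 1. Let j, k ≥ 1 be natural numbers and let a, b : Fin n → Fin 4 with weight a = j and weight b = k. Then the commutator P a * P b - P b * P a lies in the span of Pauli strings with weight in {w | |(j:ℤ) - k| + 1 ≤ w ∧ w ≤ j + k - 1 ∧ w ≡ j + k - 1 [MOD 2]}. -/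
/-!
At a single site, two Pauli matrices `σ p`, `σ q` multiply to a scalar times a Pauli matrix that is
the identity exactly when `p = q`, and they anticommute exactly when `p`, `q` are distinct and both
nonzero (otherwise they commute). Taking Kronecker products, `P a * P b = z • P c` and
`P b * P a = (-1) ^ m • z • P c`, where `m` is the number of anticommuting sites and
`weight c = #{i | a i ≠ b i}`. For `m` even the commutator vanishes.

For `m` odd, let `e` count the sites where `a` and `b` agree and are nonzero. Counting site by site
gives `j + k = weight c + m + 2 * e`, hence the parity and the upper bound, together with
`j + m ≤ k + weight c` and `k + m ≤ j + weight c`, hence the lower bound.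
-/

open Matrix

/-- The Pauli matrices labelled `p` and `q` anticommute. -/
def PauliAnti (p q : Fin 4) : Prop := p ≠ 0 ∧ q ≠ 0 ∧ p ≠ q

instance (p q : Fin 4) : Decidable (PauliAnti p q) := by
  unfold PauliAnti; infer_instance

/-- Single-site rule: the two orders of multiplication give the same Pauli matrix up to the sign
`-1` exactly for anticommuting labels, and that matrix is the identity exactly when `p = q`. -/
lemma pauli_mul_pauli (p q : Fin 4) : ∃ (r : Fin 4) (z : ℂ),
    pauli p * pauli q = z • pauli r ∧
    pauli q * pauli p = ((if PauliAnti p q then -1 else 1) * z) • pauli r ∧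
    (r ≠ 0 ↔ p ≠ q) := by
  -- Since `1 + 2 + 3 = 6`, distinct nonzero labels `p`, `q` have third label `6 - p - q`; the phase
  -- is `I` when `(p, q)` is in cyclic order and `-I` otherwise.
  let r : Fin 4 := if p = q then 0 else if p = 0 then q else if q = 0 then p else 6 - p - q
  let z : ℂ := if PauliAnti p q then (if q = p + 1 ∨ (p = 3 ∧ q = 1) then Complex.I else -Complex.I)
    else 1
  have neg₁ : (-1 : Fin 4) = 3 := rfl
  have neg₃ : (-3 : Fin 4) = 1 := rfl
  refine ⟨r, z, ?_, ?_, by revert p q; decide⟩ <;>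
  · fin_cases p <;> fin_cases q <;> ext x y <;> fin_cases x <;> fin_cases y <;>
      simp [r, z, pauli, PauliAnti, Matrix.mul_apply, Fin.sum_univ_two, Matrix.one_apply,
        neg₁, neg₃]

/-- Pauli strings multiply site by site. -/
lemma pauliString_mul {n : ℕ} (a b c : Fin n → Fin 4) (z : Fin n → ℂ)
    (h : ∀ i, pauli (a i) * pauli (b i) = z i • pauli (c i)) :
    pauliString a * pauliString b = (∏ i, z i) • pauliString c := by
  ext x y
  have h' : ∀ i, ∑ w, pauli (a i) (x i) w * pauli (b i) w (y i) = z i * pauli (c i) (x i) (y i) := by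
    intro i
    rw [← Matrix.mul_apply, h i, Matrix.smul_apply, smul_eq_mul]
  simp only [Matrix.mul_apply, pauliString, Matrix.of_apply, Matrix.smul_apply, smul_eq_mul,
    ← Finset.prod_mul_distrib, ← h']
  rw [Finset.prod_univ_sum, Fintype.piFinset_univ]

/-- Grading of commutators of Pauli-weight subspaces (equation (26)): the commutator of a
weight-`j` and a weight-`k` Pauli string lies in the span of Pauli strings whose weight `w`
satisfies `|j - k| + 1 ≤ w ≤ j + k - 1` and `w ≡ j + k - 1 (mod 2)`. -/
theorem pauliString_commutator_mem_span (n : ℕ) (hn : 1 ≤ n) (j k : ℕ)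
    (hj : 1 ≤ j) (hk : 1 ≤ k) (a b : Fin n → Fin 4)
    (ha : pauliWeight a = j) (hb : pauliWeight b = k) :
    pauliString a * pauliString b - pauliString b * pauliString a
      ∈ pauliSpan n {w | |(j : ℤ) - (k : ℤ)| + 1 ≤ (w : ℤ) ∧ w ≤ j + k - 1 ∧
          w ≡ j + k - 1 [MOD 2]} := by
  choose r z h₁ h₂ h₃ using pauli_mul_pauli
  set c : Fin n → Fin 4 := fun i => r (a i) (b i) with hc
  set m : ℕ := (Finset.univ.filter fun i => PauliAnti (a i) (b i)).card with hm
  set e : ℕ := (Finset.univ.filter fun i => a i ≠ 0 ∧ a i = b i).card with he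
  have hab := pauliString_mul a b c _ fun i => h₁ (a i) (b i)
  have hba := pauliString_mul b a c _ fun i => h₂ (a i) (b i)
  have hsign : ∏ i, (if PauliAnti (a i) (b i) then (-1 : ℂ) else 1) = (-1) ^ m := by
    rw [Finset.prod_ite, Finset.prod_const, Finset.prod_const_one, mul_one]
  rw [Finset.prod_mul_distrib, hsign] at hba
  rw [hab, hba]
  rcases Nat.even_or_odd m with hpar | hpar
  · rw [hpar.neg_one_pow, one_mul, sub_self]
    exact Submodule.zero_mem _
  have hw : pauliWeight c = (Finset.univ.filter fun i => a i ≠ b i).card := by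
    simp only [pauliWeight, hc, h₃]
  have key : pauliWeight a + pauliWeight b = pauliWeight c + m + 2 * e := by
    rw [hw, hm, he]
    simp only [pauliWeight, Finset.card_filter, Finset.mul_sum, ← Finset.sum_add_distrib]
    refine Finset.sum_congr rfl fun i _ => ?_
    generalize a i = p; generalize b i = q
    revert p q; decide
  have low₁ : pauliWeight a + m ≤ pauliWeight b + pauliWeight c := by
    rw [hw, hm]
    simp only [pauliWeight, Finset.card_filter, ← Finset.sum_add_distrib]
    refine Finset.sum_le_sum fun i _ => ?_
    generalize a i = p; generalize b i = q
    revert p q; decide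
  have low₂ : pauliWeight b + m ≤ pauliWeight a + pauliWeight c := by
    rw [hw, hm]
    simp only [pauliWeight, Finset.card_filter, ← Finset.sum_add_distrib]
    refine Finset.sum_le_sum fun i _ => ?_
    generalize a i = p; generalize b i = q
    revert p q; decide
  obtain ⟨t, ht⟩ := hpar
  have hmem : pauliString c ∈ pauliSpan n {w | |(j : ℤ) - (k : ℤ)| + 1 ≤ (w : ℤ) ∧
      w ≤ j + k - 1 ∧ w ≡ j + k - 1 [MOD 2]} := by
    refine Submodule.subset_span ⟨c, ⟨?_, ?_, ?_⟩, rfl⟩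
    · have : |(j : ℤ) - (k : ℤ)| ≤ (pauliWeight c : ℤ) - 1 := abs_le.2 ⟨by omega, by omega⟩
      linarith
    · omega
    · unfold Nat.ModEq; omega
  exact Submodule.sub_mem _ (Submodule.smul_mem _ _ hmem) (Submodule.smul_mem _ _ hmem)
end

section
/- Vanishing of the weight-1 component of the commutator. Fix a natural number n ≥ 1. Let A lie in the span of Pauli strings with weight in {1, 2} and let B lie in the span of Pauli strings with weight in {0} ∪ {w | w ≥ 3}. Then for every c : Fin n → Fin 4 with weight c = 1, trace (P c * (A * B - B * A)) = 0. -/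
/-! The traces `Tr (P c * A * B)` and `Tr (P c * B * A)` are bilinear in `A`, `B`, so it suffices
to compare them for Pauli strings `A = P a`, `B = P b`. The trace of a product of Pauli strings factorizes over the sites (`trace_pauliString_mul_mul`), so the two
traces are `∏ i, Tr (σ (c i) σ (a i) σ (b i))` and `∏ i, Tr (σ (c i) σ (b i) σ (a i))`.
Whenever one of the three labels at a site is `0`, the two factors there agree, by cyclicity of the
trace. This settles `b = 0`. If `b` has weight at least `3`, then either some site is in the support
of `b` but in neither that of `a` nor that of `c`, and both products contain the factor
`Tr (σ (b i)) = 0`; or the support of `b` is covered by those of `a` and `c`, whose sizes are at most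
`2` and `1`, so these are disjoint and at each site `a i = 0` or `c i = 0`.
-/

open Matrix

/-- The tensor product of a family of `2 × 2` matrices, in the same coordinates as
`pauliString`. -/
noncomputable def siteProduct {n : ℕ} (f : Fin n → Matrix (Fin 2) (Fin 2) ℂ) :
    Matrix (Fin n → Fin 2) (Fin n → Fin 2) ℂ :=
  Matrix.of fun x y => ∏ i, f i (x i) (y i)

lemma siteProduct_mul {n : ℕ} (f g : Fin n → Matrix (Fin 2) (Fin 2) ℂ) :
    siteProduct f * siteProduct g = siteProduct fun i => f i * g i := by
  ext x y
  simp only [siteProduct, Matrix.mul_apply, Matrix.of_apply, Finset.prod_univ_sum,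
    Fintype.piFinset_univ, Finset.prod_mul_distrib]

lemma trace_siteProduct {n : ℕ} (f : Fin n → Matrix (Fin 2) (Fin 2) ℂ) :
    (siteProduct f).trace = ∏ i, (f i).trace := by
  simp only [siteProduct, Matrix.trace, Matrix.diag_apply, Matrix.of_apply, Finset.prod_univ_sum,
    Fintype.piFinset_univ]

lemma trace_pauliString_mul_mul {n : ℕ} (a b c : Fin n → Fin 4) :
    (pauliString c * (pauliString a * pauliString b)).trace =
      ∏ i, (pauli (c i) * (pauli (a i) * pauli (b i))).trace := by
  rw [← trace_siteProduct, ← siteProduct_mul, ← siteProduct_mul]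
  rfl

lemma trace_pauli_of_ne_zero (k : Fin 4) (hk : k ≠ 0) : (pauli k).trace = 0 := by
  fin_cases k
  · exact absurd rfl hk
  all_goals simp [pauli, Matrix.trace_fin_two]

lemma trace_pauli_swap (a b c : Fin 4) (h : a = 0 ∨ b = 0 ∨ c = 0) :
    (pauli c * (pauli a * pauli b)).trace = (pauli c * (pauli b * pauli a)).trace := by
  have h_one : pauli 0 = 1 := rfl
  rcases h with rfl | rfl | rfl
  · simp [h_one]
  · simp [h_one]
  · simpa [h_one] using Matrix.trace_mul_comm (pauli a) (pauli b)

lemma trace_pauliString_swap {n : ℕ} (a b c : Fin n → Fin 4) (ha : pauliWeight a ≤ 2)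
    (hb : pauliWeight b = 0 ∨ 3 ≤ pauliWeight b) (hc : pauliWeight c = 1) :
    (pauliString c * (pauliString a * pauliString b)).trace =
      (pauliString c * (pauliString b * pauliString a)).trace := by
  rw [trace_pauliString_mul_mul, trace_pauliString_mul_mul]
  by_cases hex : ∃ i, b i ≠ 0 ∧ a i = 0 ∧ c i = 0
  · obtain ⟨i, hbi, hai, hci⟩ := hex
    have h_one : pauli 0 = 1 := rfl
    rw [Finset.prod_eq_zero (Finset.mem_univ i), Finset.prod_eq_zero (Finset.mem_univ i)]
    all_goals simp [hai, hci, h_one, trace_pauli_of_ne_zero _ hbi]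
  · refine Finset.prod_congr rfl fun i _ => trace_pauli_swap _ _ _ ?_
    rcases hb with hb | hb
    · right; left
      by_contra hbi
      exact Finset.notMem_empty i (Finset.card_eq_zero.mp hb ▸ by simpa using hbi)
    · by_contra! hne
      unfold pauliWeight at ha hb hc
      have hsub : (Finset.univ.filter fun i => b i ≠ 0) ⊆
          (Finset.univ.filter fun i => a i ≠ 0) ∪ (Finset.univ.filter fun i => c i ≠ 0) := by
        intro j hj
        simp only [Finset.mem_union, Finset.mem_filter, Finset.mem_univ, true_and] at hj ⊢
        by_contra! hj'
        exact hex ⟨j, hj, hj'⟩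
      have hle := Finset.card_le_card hsub
      -- A site common to the supports of `a` and `c` leaves room for only two sites in the union.
      have hinter : 0 < ((Finset.univ.filter fun i => a i ≠ 0) ∩
          (Finset.univ.filter fun i => c i ≠ 0)).card :=
        Finset.card_pos.mpr ⟨i, by simp [hne.1, hne.2.2]⟩
      have hcard := Finset.card_union_add_card_inter (Finset.univ.filter fun i => a i ≠ 0)
        (Finset.univ.filter fun i => c i ≠ 0)
      omega

/-- Vanishing of the weight-1 component of the commutator: if `A` lies in the span of
Pauli strings of weight `1` or `2`, and `B` in the span of those of weight `0` or `≥ 3`,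
then `Tr (P c * [A, B]) = 0` for every Pauli string `P c` of weight `1`. -/
theorem trace_pauliString_weight_one_commutator_eq_zero (n : ℕ) (hn : 1 ≤ n)
    (A B : Matrix (Fin n → Fin 2) (Fin n → Fin 2) ℂ)
    (hA : A ∈ pauliSpan n {1, 2})
    (hB : B ∈ pauliSpan n ({0} ∪ {w | 3 ≤ w}))
    (c : Fin n → Fin 4) (hc : pauliWeight c = 1) :
    (pauliString c * (A * B - B * A)).trace = 0 := by
  rw [Matrix.mul_sub, Matrix.trace_sub, sub_eq_zero]
  unfold pauliSpan at hA hB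
  induction hA using Submodule.span_induction with
  | zero => simp
  | add X Y _ _ hX hY => simp only [add_mul, mul_add, Matrix.trace_add, hX, hY]
  | smul r X _ hX =>
    simp only [Matrix.smul_mul, Matrix.mul_smul, Matrix.trace_smul, hX]
  | mem X hX =>
    obtain ⟨a, ha, rfl⟩ := hX
    induction hB using Submodule.span_induction with
    | zero => simp
    | add X Y _ _ hX hY => simp only [add_mul, mul_add, Matrix.trace_add, hX, hY]
    | smul r X _ hX =>
      simp only [Matrix.smul_mul, Matrix.mul_smul, Matrix.trace_smul, hX]
    | mem X hX =>
      obtain ⟨b, hb, rfl⟩ := hX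
      refine trace_pauliString_swap a b c ?_ (by simpa using hb) hc
      rcases ha with ha | ha
      · exact ha.le.trans one_le_two
      · exact le_of_eq ha
end

section
/- Commutation sign of Pauli strings. Fix a natural number n ≥ 1 and let a, b : Fin n → Fin 4. Let m be the cardinality of {i : Fin n | a i ≠ 0 ∧ b i ≠ 0 ∧ a i ≠ b i}. Then P a * P b = (-1)^m • (P b * P a). In particular, P a and P b commute if m is even and anticommute if m is odd. -/
/-!
Multiplication of Kronecker products is sitewise (`pauliString_mul_apply`), and at each site
the two Pauli matrices commute up to a sign (`pauli_mul_comm_sign`), which is `-1` exactly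
when they are distinct and both different from the identity. The product of these signs over
all sites is `(-1) ^ m`.
-/

open Matrix

/-- The sitewise relation: two Pauli matrices anticommute exactly when they are distinct and
neither is the identity, and commute otherwise. -/
theorem pauli_mul_comm_sign (p q : Fin 4) :
    pauli p * pauli q
      = (if p ≠ 0 ∧ q ≠ 0 ∧ p ≠ q then (-1 : ℂ) else 1) • (pauli q * pauli p) := by
  fin_cases p <;> fin_cases q <;> ext x y <;> fin_cases x <;> fin_cases y <;>
    simp [pauli, Matrix.mul_apply, Fin.sum_univ_two]

/-- Mixed-product property: a product of Pauli strings is the Kronecker product of the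
sitewise products. -/
theorem pauliString_mul_apply {n : ℕ} (a b : Fin n → Fin 4) (x y : Fin n → Fin 2) :
    (pauliString a * pauliString b) x y = ∏ i, (pauli (a i) * pauli (b i)) (x i) (y i) := by
  simp only [Matrix.mul_apply, pauliString, Matrix.of_apply, Finset.prod_univ_sum,
    Fintype.piFinset_univ, Finset.prod_mul_distrib]

/-- Commutation sign of Pauli strings: `P a * P b = (-1)^m • (P b * P a)`, where `m` is
the number of sites on which `a` and `b` carry distinct non-identity Pauli matrices. -/
theorem pauliString_mul_comm_sign (n : ℕ) (hn : 1 ≤ n) (a b : Fin n → Fin 4) :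
    pauliString a * pauliString b
      = ((-1 : ℂ) ^ (Finset.univ.filter
            fun i => a i ≠ 0 ∧ b i ≠ 0 ∧ a i ≠ b i).card) •
          (pauliString b * pauliString a) := by
  ext x y
  rw [Matrix.smul_apply, pauliString_mul_apply, pauliString_mul_apply, smul_eq_mul,
    ← Finset.prod_const, Finset.prod_filter, ← Finset.prod_mul_distrib]
  refine Finset.prod_congr rfl fun i _ => ?_
  rw [pauli_mul_comm_sign, Matrix.smul_apply, smul_eq_mul]
end

section
/- Key derivative identity of the Krotov-like scheme (equation (B2)). Let d ≥ 1, ι a finite index type, and τ : ι → Matrix (Fin d) (Fin d) ℂ a family of Hermitian matrices ((τ a)ᴴ = τ a). Let U_in, U_out, V_out : ℝ → Matrix (Fin d) (Fin d) ℂ, h_in, hbar, h_out : ℝ → ι → ℝ, lambar, lam_out : ℝ → ℝ, and set H_in t = ∑ a, (h_in t a : ℂ) • τ a, Hbar t = ∑ a, (hbar t a : ℂ) • τ a, H_out t = ∑ a, (h_out t a : ℂ) • τ a. Fix t and assume: HasDerivAt U_in (-I • (H_in t * U_in t)) t, HasDerivAt U_out (-I • (H_out t * U_out t)) t, HasDerivAt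 V_out (-I • (Hbar t * V_out t)) t, and for every a, lam_out t * h_out t a = 2 * (trace (τ a * U_out t * (V_out t)ᴴ)).re and lambar t * hbar t a = 2 * (trace (τ a * U_in t * (V_out t)ᴴ)).re. Then the real-valued function g s := 2 * (trace (I • ((V_out s)ᴴ * (U_out s - U_in s)))).re satisfies HasDerivAt g (∑ a, (lam_out t * h_out t a * (h_out t a - hbar t a) + lambar t * hbar t a * (hbar t a - h_in t a))) t. -/
/-!
Differentiating `s ↦ Tr (Vᴴ (U_out - U_in))` by the product rule and inserting the three
Schrödinger equations, the hermiticity of the `τ a` turns `(-i H̄ V)ᴴ` into `i Vᴴ H̄`, so that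
`d/ds [i Tr (Vᴴ (U_out - U_in))] = Tr (Vᴴ ((H_out - H̄) U_out + (H̄ - H_in) U_in))`.
Expanding the Hamiltonians in the `τ a` and cycling the trace, the coefficients are the traces
`Tr (τ a U Vᴴ)`, whose real parts are given by the multiplier equations. The analytic input is
`hasDerivAt_trace_conjTranspose_mul`, the algebraic one `trace_conjTranspose_mul_sum_mul`.
-/

open Matrix

attribute [local instance] Matrix.normedAddCommGroup Matrix.normedSpace

/-- Product rule for the Hilbert–Schmidt pairing `Tr (Aᴴ B)`, along a real parameter. -/
theorem hasDerivAt_trace_conjTranspose_mul {d : ℕ}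
    {A B : ℝ → Matrix (Fin d) (Fin d) ℂ} {A' B' : Matrix (Fin d) (Fin d) ℂ} {t : ℝ}
    (hA : HasDerivAt A A' t) (hB : HasDerivAt B B' t) :
    HasDerivAt (fun s => ((A s)ᴴ * B s).trace) ((A'ᴴ * B t).trace + ((A t)ᴴ * B').trace) t := by
  -- the chosen norm on matrices is the sup norm of the entries, so derivatives are entrywise
  have hA1 : ∀ i j, HasDerivAt (fun s => A s i j) (A' i j) t := fun i j =>
    hasDerivAt_pi.1 (hasDerivAt_pi.1 hA i) j
  have hB1 : ∀ i j, HasDerivAt (fun s => B s i j) (B' i j) t := fun i j =>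
    hasDerivAt_pi.1 (hasDerivAt_pi.1 hB i) j
  simp only [Matrix.trace, Matrix.diag_apply, Matrix.mul_apply, Matrix.conjTranspose_apply,
    ← Finset.sum_add_distrib]
  exact HasDerivAt.fun_sum fun i _ => HasDerivAt.fun_sum fun j _ =>
    (hA1 j i).star.mul (hB1 j i)

/-- Linear expansion of the Hamiltonian, followed by cyclicity of the trace, to reach the traces
of the multiplier equations. -/
theorem trace_conjTranspose_mul_sum_mul {d : ℕ} {ι : Type*} [Fintype ι]
    (τ : ι → Matrix (Fin d) (Fin d) ℂ) (h : ι → ℝ) (U V : Matrix (Fin d) (Fin d) ℂ) :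
    (Vᴴ * ((∑ a, (h a : ℂ) • τ a) * U)).trace = ∑ a, (h a : ℂ) * (τ a * U * Vᴴ).trace := by
  rw [Matrix.trace_mul_comm, Finset.sum_mul, Finset.sum_mul, Matrix.trace_sum]
  simp [Matrix.trace_smul]

/-- Key derivative identity of the Krotov-like scheme (equation (B2)): at a time `t`
where the three Schrödinger equations and the two multiplier equations hold, the function
`g s = 2 Re Tr (i (V_out s)ᴴ (U_out s - U_in s))` has derivative
`∑ a, (λ_out h_out (h_out - h̄) + λ̄ h̄ (h̄ - h_in))`. -/
theorem krotov_key_derivative_identity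
    (d : ℕ) (hd : 1 ≤ d)
    (ι : Type*) [Fintype ι]
    (τ : ι → Matrix (Fin d) (Fin d) ℂ) (hτ : ∀ a, (τ a)ᴴ = τ a)
    (Uin Uout Vout : ℝ → Matrix (Fin d) (Fin d) ℂ)
    (hin hbar hout : ℝ → ι → ℝ) (lambar lamout : ℝ → ℝ) (t : ℝ)
    (hUin : HasDerivAt Uin (-Complex.I • ((∑ a, (hin t a : ℂ) • τ a) * Uin t)) t)
    (hUout : HasDerivAt Uout (-Complex.I • ((∑ a, (hout t a : ℂ) • τ a) * Uout t)) t)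
    (hVout : HasDerivAt Vout (-Complex.I • ((∑ a, (hbar t a : ℂ) • τ a) * Vout t)) t)
    (hmultout : ∀ a, lamout t * hout t a = 2 * ((τ a * Uout t * (Vout t)ᴴ).trace).re)
    (hmultbar : ∀ a, lambar t * hbar t a = 2 * ((τ a * Uin t * (Vout t)ᴴ).trace).re) :
    HasDerivAt
      (fun s => 2 * ((Complex.I • ((Vout s)ᴴ * (Uout s - Uin s))).trace).re)
      (∑ a, (lamout t * hout t a * (hout t a - hbar t a)
        + lambar t * hbar t a * (hbar t a - hin t a))) t := by
  have hD := hasDerivAt_trace_conjTranspose_mul hVout (hUout.sub hUin)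
  have hH : (∑ a, (hbar t a : ℂ) • τ a)ᴴ = ∑ a, (hbar t a : ℂ) • τ a := by
    simp [Matrix.conjTranspose_sum, Matrix.conjTranspose_smul, hτ]
  have hR := ((Complex.reCLM.hasFDerivAt.comp_hasDerivAt t (hD.const_mul Complex.I)).const_mul 2)
  refine (hR.congr_deriv ?_).congr_of_eventuallyEq (Filter.Eventually.of_forall fun s => ?_)
  · have key : Complex.I * (((-Complex.I • ((∑ a, (hbar t a : ℂ) • τ a) * Vout t))ᴴ
          * (Uout t - Uin t)).trace
        + ((Vout t)ᴴ * (-Complex.I • ((∑ a, (hout t a : ℂ) • τ a) * Uout t)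
          - -Complex.I • ((∑ a, (hin t a : ℂ) • τ a) * Uin t))).trace)
        = ∑ a, (((hout t a - hbar t a : ℝ) : ℂ) * (τ a * Uout t * (Vout t)ᴴ).trace
          + ((hbar t a - hin t a : ℝ) : ℂ) * (τ a * Uin t * (Vout t)ᴴ).trace) := by
      rw [Matrix.conjTranspose_smul, Matrix.conjTranspose_mul, hH, Matrix.smul_mul,
        Matrix.mul_assoc, Matrix.mul_sub, Matrix.mul_sub, Matrix.mul_sub, Matrix.mul_smul,
        Matrix.mul_smul, Matrix.trace_smul, Matrix.trace_sub, Matrix.trace_sub,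
        Matrix.trace_smul, Matrix.trace_smul]
      simp only [trace_conjTranspose_mul_sum_mul, Complex.ofReal_sub, sub_mul,
        Finset.sum_add_distrib, Finset.sum_sub_distrib, smul_eq_mul, star_neg,
        Complex.star_def, Complex.conj_I, neg_neg]
      ring_nf
      simp only [Complex.I_sq]
      ring
    change 2 * (Complex.I * (_ : ℂ)).re = _
    refine (congrArg (fun z : ℂ => 2 * z.re) key).trans ?_
    simp only [Complex.re_sum, Finset.mul_sum, Complex.add_re, Complex.re_ofReal_mul]
    refine Finset.sum_congr rfl fun a _ => ?_
    rw [hmultout a, hmultbar a]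
    ring
  · simp [Matrix.trace_smul]
end
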